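/- arXiv:2109.12031 — 2 statements merged into one kernel-verified Lean document; each statement's English description precedes it below -/
import Mathlib

section
/- Let M ⊆ M_{ℓ,r}(ℂ) be a TRO (M M* M ⊆ M) such that M* M spans ⊕_{j=1}^k M_{r_j}(ℂ) (block-diagonally embedded in M_r(ℂ), with r = r₁ + ⋯ + r_k) and M M* spans ⊕_{i=1}^m M_{ℓ_i}(ℂ) (block-diagonally embedded in M_ℓ(ℂ), with ℓ = ℓ₁ + ⋯ + ℓ_m). Then k = m, and there exist N = k and surjective maps g : {1,…,r} → {1,…,N} and f : {1,…,ℓ} → {1,…,N} (constant on the respective blocks) such that M = { a ∈ M_{ℓ,r}(ℂ) : a_{ij} = 0 whenever f(i) ≠ g(j) }. -/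
open Matrix

/-- A TRO `M ⊆ M_{ℓ,r}(ℂ)` whose right algebra `span(M* M)` is the block algebra
determined by a block assignment `β : Fin r → Fin k` and whose left algebra
`span(M M*)` is the block algebra determined by `γ : Fin ℓ → Fin m` satisfies `k = m`,
and `M` consists exactly of the matrices supported on pairs of blocks matched by
surjections `f, g` onto `Fin k` (constant on the respective blocks). -/
theorem stmt_10 {l r k m : ℕ}
    (M : Submodule ℂ (Matrix (Fin l) (Fin r) ℂ))
    (hTRO : ∀ a ∈ M, ∀ b ∈ M, ∀ c ∈ M, a * bᴴ * c ∈ M)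
    (β : Fin r → Fin k) (hβ : Function.Surjective β)
    (γ : Fin l → Fin m) (hγ : Function.Surjective γ)
    (hMM : ((Submodule.span ℂ {x : Matrix (Fin r) (Fin r) ℂ |
        ∃ a ∈ M, ∃ b ∈ M, x = aᴴ * b}) : Set (Matrix (Fin r) (Fin r) ℂ))
      = {x | ∀ j j', β j ≠ β j' → x j j' = 0})
    (hMMl : ((Submodule.span ℂ {x : Matrix (Fin l) (Fin l) ℂ |
        ∃ a ∈ M, ∃ b ∈ M, x = a * bᴴ}) : Set (Matrix (Fin l) (Fin l) ℂ))
      = {x | ∀ i i', γ i ≠ γ i' → x i i' = 0}) :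
    k = m ∧ ∃ (g : Fin r → Fin k) (f : Fin l → Fin k),
      Function.Surjective g ∧ Function.Surjective f ∧
      (∀ j j', β j = β j' → g j = g j') ∧
      (∀ i i', γ i = γ i' → f i = f i') ∧
      (M : Set (Matrix (Fin l) (Fin r) ℂ)) = {a | ∀ i j, f i ≠ g j → a i j = 0} := by
  classical
  have hR : ∀ c ∈ M, ∀ y : Matrix (Fin r) (Fin r) ℂ, (∀ j j', β j ≠ β j' → y j j' = 0) →
      c * y ∈ M := by
    intro c hc y hy
    have hy' : y ∈ Submodule.span ℂ {x : Matrix (Fin r) (Fin r) ℂ |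
        ∃ a ∈ M, ∃ b ∈ M, x = aᴴ * b} := by
      rw [← SetLike.mem_coe, hMM]; exact hy
    clear hy
    induction hy' using Submodule.span_induction with
    | mem x hx =>
      obtain ⟨a, ha, b, hb, rfl⟩ := hx
      rw [← Matrix.mul_assoc]
      exact hTRO c hc a ha b hb
    | zero => simp
    | add x y hx hy h1 h2 =>
      rw [Matrix.mul_add]; exact M.add_mem h1 h2
    | smul t x hx h1 =>
      rw [Matrix.mul_smul]; exact M.smul_mem _ h1
  have hL : ∀ c ∈ M, ∀ y : Matrix (Fin l) (Fin l) ℂ, (∀ j j', γ j ≠ γ j' → y j j' = 0) →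
      y * c ∈ M := by
    intro c hc y hy
    have hy' : y ∈ Submodule.span ℂ {x : Matrix (Fin l) (Fin l) ℂ |
        ∃ a ∈ M, ∃ b ∈ M, x = a * bᴴ} := by
      rw [← SetLike.mem_coe, hMMl]; exact hy
    clear hy
    induction hy' using Submodule.span_induction with
    | mem x hx =>
      obtain ⟨a, ha, b, hb, rfl⟩ := hx
      exact hTRO a ha b hb c hc
    | zero => simp
    | add x y hx hy h1 h2 =>
      rw [Matrix.add_mul]; exact M.add_mem h1 h2
    | smul t x hx h1 =>
      rw [Matrix.smul_mul]; exact M.smul_mem _ h1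
  have hsR : ∀ j j', β j = β j' → ∀ p q, β p ≠ β q →
      (Matrix.single j j' (1 : ℂ)) p q = 0 := by
    intro j j' h p q hpq
    apply Matrix.single_apply_of_ne
    rintro ⟨rfl, rfl⟩
    exact hpq h
  have hsL : ∀ j j', γ j = γ j' → ∀ p q, γ p ≠ γ q →
      (Matrix.single j j' (1 : ℂ)) p q = 0 := by
    intro j j' h p q hpq
    apply Matrix.single_apply_of_ne
    rintro ⟨rfl, rfl⟩
    exact hpq h
  have key : ∀ a ∈ M, ∀ i j, a i j ≠ 0 → ∀ i' j', γ i' = γ i → β j = β j' →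
      Matrix.single i' j' (1 : ℂ) ∈ M := by
    intro a ha i j hij i' j' hi hj
    have h1 := hR _ (hL a ha _ (hsL i' i hi)) _ (hsR j j' hj)
    rw [Matrix.single_mul_mul_single] at h1
    have h2 := M.smul_mem (a i j)⁻¹ h1
    rw [Matrix.smul_single] at h2
    simpa [hij] using h2
  have blk : ∀ i j i' j', Matrix.single i j (1 : ℂ) ∈ M → γ i' = γ i → β j = β j' →
      Matrix.single i' j' (1 : ℂ) ∈ M := by
    intro i j i' j' h hi hj
    exact key _ h i j (by simp) i' j' hi hj
  have fun1 : ∀ i j j', Matrix.single i j (1 : ℂ) ∈ M → Matrix.single i j' (1 : ℂ) ∈ M →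
      β j = β j' := by
    intro i j j' h h'
    by_contra hne
    have h1 : (Matrix.single i j (1 : ℂ))ᴴ * Matrix.single i j' (1 : ℂ) ∈
        {x : Matrix (Fin r) (Fin r) ℂ | ∀ j j', β j ≠ β j' → x j j' = 0} := by
      rw [← hMM]
      exact Submodule.subset_span ⟨_, h, _, h', rfl⟩
    have h2 := h1 j j' hne
    simp [Matrix.conjTranspose_single] at h2
  have fun2 : ∀ i i' j, Matrix.single i j (1 : ℂ) ∈ M → Matrix.single i' j (1 : ℂ) ∈ M →
      γ i = γ i' := by
    intro i i' j h h'
    by_contra hne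
    have h1 : Matrix.single i j (1 : ℂ) * (Matrix.single i' j (1 : ℂ))ᴴ ∈
        {x : Matrix (Fin l) (Fin l) ℂ | ∀ j j', γ j ≠ γ j' → x j j' = 0} := by
      rw [← hMMl]
      exact Submodule.subset_span ⟨_, h, _, h', rfl⟩
    have h2 := h1 i i' hne
    simp [Matrix.conjTranspose_single] at h2
  have ex1 : ∀ j, ∃ i, Matrix.single i j (1 : ℂ) ∈ M := by
    intro j
    by_contra! hno
    have hz : ∀ a ∈ M, ∀ i, a i j = 0 := by
      intro a ha i
      by_contra h
      exact hno i (key a ha i j h i j rfl rfl)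
    have hall : ∀ y ∈ Submodule.span ℂ {x : Matrix (Fin r) (Fin r) ℂ |
        ∃ a ∈ M, ∃ b ∈ M, x = aᴴ * b}, y j j = 0 := by
      intro y hy
      induction hy using Submodule.span_induction with
      | mem x hx =>
        obtain ⟨a, ha, b, hb, rfl⟩ := hx
        simp [Matrix.mul_apply, hz b hb]
      | zero => simp
      | add x y hx hy h1 h2 => simp [h1, h2]
      | smul t x hx h1 => simp [h1]
    have h1 := hall (Matrix.single j j 1) (by
      rw [← SetLike.mem_coe, hMM]; exact hsR j j rfl)
    simp at h1
  have ex2 : ∀ i, ∃ j, Matrix.single i j (1 : ℂ) ∈ M := by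
    intro i
    by_contra! hno
    have hz : ∀ a ∈ M, ∀ j, a i j = 0 := by
      intro a ha j
      by_contra h
      exact hno j (key a ha i j h i j rfl rfl)
    have hall : ∀ y ∈ Submodule.span ℂ {x : Matrix (Fin l) (Fin l) ℂ |
        ∃ a ∈ M, ∃ b ∈ M, x = a * bᴴ}, y i i = 0 := by
      intro y hy
      induction hy using Submodule.span_induction with
      | mem x hx =>
        obtain ⟨a, ha, b, hb, rfl⟩ := hx
        simp [Matrix.mul_apply, hz a ha]
      | zero => simp
      | add x y hx hy h1 h2 => simp [h1, h2]
      | smul t x hx h1 => simp [h1]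
    have h1 := hall (Matrix.single i i 1) (by
      rw [← SetLike.mem_coe, hMMl]; exact hsL i i rfl)
    simp at h1
  choose φ hφ using ex2
  have hP : ∀ i j, β (φ i) = β j ↔ Matrix.single i j (1 : ℂ) ∈ M := fun i j =>
    ⟨fun h => blk _ _ _ _ (hφ i) rfl h, fun h => fun1 _ _ _ (hφ i) h⟩
  have hγf : ∀ i i', γ i = γ i' → β (φ i) = β (φ i') := by
    intro i i' h
    exact fun1 i' _ _ (blk _ _ _ _ (hφ i) h.symm rfl) (hφ i')
  have hfγ : ∀ i i', β (φ i) = β (φ i') → γ i = γ i' := by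
    intro i i' h
    exact fun2 _ _ _ ((hP i (φ i')).1 h) (hφ i')
  have hfs : Function.Surjective (fun i => β (φ i)) := by
    intro c
    obtain ⟨j, rfl⟩ := hβ c
    obtain ⟨i, hi⟩ := ex1 j
    exact ⟨i, (hP i j).2 hi⟩
  refine ⟨?_, β, fun i => β (φ i), hβ, hfs, fun _ _ h => h, hγf, ?_⟩
  · have hb : Function.Bijective (fun c : Fin m => β (φ (Function.surjInv hγ c))) := by
      constructor
      · intro c c' h
        have := hfγ _ _ h
        rwa [Function.surjInv_eq hγ, Function.surjInv_eq hγ] at this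
      · intro d
        obtain ⟨i, rfl⟩ := hfs d
        exact ⟨γ i, hγf _ _ (Function.surjInv_eq hγ _)⟩
    have := Fintype.card_of_bijective hb
    simpa using this.symm
  · ext a
    constructor
    · intro ha i j hij
      by_contra h
      exact hij ((hP i j).2 (key a ha i j h i j rfl rfl))
    · intro ha
      rw [SetLike.mem_coe, Matrix.matrix_eq_sum_single a]
      refine M.sum_mem fun i _ => M.sum_mem fun j _ => ?_
      by_cases h : β (φ i) = β j
      · have := M.smul_mem (a i j) ((hP i j).1 h)
        simpa [Matrix.smul_single] using this
      · rw [ha i j h]; simp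
end

section
/- Let S ⊆ M_d(ℂ) be an operator system (a self-adjoint subspace containing I_d) that acts irreducibly, in the sense that there is no non-trivial subspace L ⊆ ℂ^d that is reducing for S and such that the compression map s ↦ P_L s |_L is completely isometric on S. Suppose the C*-algebra generated by S is ⊕_{j=1}^n M_{d_j}(ℂ) (block diagonal, d₁ + ⋯ + d_n = d). If Φ is a surjective *-homomorphism from C*(S) onto a C*-algebra B that is completely isometric on S, then Φ is injective; equivalently, the Šilov ideal of S in C*(S) is zero, so C*_env(S) = C*(S). -/
open Matrix

/-- The operator (spectral) norm of a square complex matrix, via its action on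
Euclidean space. -/
noncomputable def opN {m : Type*} [Fintype m] [DecidableEq m] (A : Matrix m m ℂ) : ℝ :=
  ‖(Matrix.toEuclideanCLM (𝕜 := ℂ) A : EuclideanSpace ℂ m →L[ℂ] EuclideanSpace ℂ m)‖

section Key
open scoped Matrix.Norms.L2Operator

/-- the block of a matrix over a product index -/
def blk {n d : ℕ} (a : Matrix (Fin n × Fin d) (Fin n × Fin d) ℂ) (i j : Fin n) :
    Matrix (Fin d) (Fin d) ℂ := Matrix.of fun x y => a (i, x) (j, y)

theorem blk_mul {n d : ℕ} (a b : Matrix (Fin n × Fin d) (Fin n × Fin d) ℂ) (i j : Fin n) :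
    blk (a * b) i j = ∑ k, blk a i k * blk b k j := by
  ext x y
  simp [blk, Matrix.mul_apply, Matrix.sum_apply, Fintype.sum_prod_type]

theorem blk_add {n d : ℕ} (a b : Matrix (Fin n × Fin d) (Fin n × Fin d) ℂ) (i j : Fin n) :
    blk (a + b) i j = blk a i j + blk b i j := by
  ext x y
  simp [blk]

theorem blk_star {n d : ℕ} (a : Matrix (Fin n × Fin d) (Fin n × Fin d) ℂ) (i j : Fin n) :
    blk (star a) i j = star (blk a j i) := by
  ext x y
  simp [blk]

theorem blk_algebraMap {n d : ℕ} (r : ℂ) (i j : Fin n) :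
    blk (algebraMap ℂ (Matrix (Fin n × Fin d) (Fin n × Fin d) ℂ) r) i j =
      if i = j then algebraMap ℂ _ r else 0 := by
  ext x y
  by_cases h : i = j <;> simp [blk, Matrix.algebraMap_matrix_apply, h]

/-- matrices with all blocks in `A` -/
def blkAlg {d : ℕ} (A : StarSubalgebra ℂ (Matrix (Fin d) (Fin d) ℂ)) (n : ℕ) :
    StarSubalgebra ℂ (Matrix (Fin n × Fin d) (Fin n × Fin d) ℂ) where
  carrier := {a | ∀ i j, blk a i j ∈ A}
  mul_mem' := by
    intro a b ha hb i j
    rw [blk_mul]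
    exact sum_mem fun k _ => mul_mem (ha i k) (hb k j)
  add_mem' := by
    intro a b ha hb i j
    rw [blk_add]
    exact add_mem (ha i j) (hb i j)
  algebraMap_mem' := by
    intro r i j
    rw [blk_algebraMap]
    split_ifs
    · exact A.algebraMap_mem' r
    · exact zero_mem A
  star_mem' := by
    intro a ha i j
    rw [blk_star]
    exact star_mem (ha j i)

/-- the amplification of `Φ` -/
def amp {d e : ℕ} (A : StarSubalgebra ℂ (Matrix (Fin d) (Fin d) ℂ))
    (Φ : A →⋆ₐ[ℂ] Matrix (Fin e) (Fin e) ℂ) (n : ℕ) :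
    blkAlg A n →⋆ₐ[ℂ] Matrix (Fin n × Fin e) (Fin n × Fin e) ℂ where
  toFun a := Matrix.of fun p q => Φ ⟨blk a.1 p.1 q.1, a.2 p.1 q.1⟩ p.2 q.2
  map_zero' := by
    ext p q
    have : (⟨blk (0 : blkAlg A n).1 p.1 q.1, (0 : blkAlg A n).2 p.1 q.1⟩ : A) = 0 :=
      Subtype.ext rfl
    simp only [Matrix.of_apply, this, map_zero, Matrix.zero_apply]
  map_one' := by
    ext p q
    have : (⟨blk (1 : blkAlg A n).1 p.1 q.1, (1 : blkAlg A n).2 p.1 q.1⟩ : A)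
        = if p.1 = q.1 then 1 else 0 := by
      apply Subtype.ext
      have := blk_algebraMap (n := n) (d := d) 1 p.1 q.1
      rw [map_one, map_one] at this
      rw [apply_ite Subtype.val]
      exact this
    simp only [Matrix.of_apply, this]
    obtain ⟨i, x⟩ := p
    obtain ⟨j, y⟩ := q
    by_cases h : i = j <;> simp [h, Matrix.one_apply]
  map_mul' := by
    intro a b
    ext p q
    have : (⟨blk (a * b).1 p.1 q.1, (a * b).2 p.1 q.1⟩ : A)
        = ∑ k, (⟨blk a.1 p.1 k, a.2 p.1 k⟩ : A) * ⟨blk b.1 k q.1, b.2 k q.1⟩ := by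
      apply Subtype.ext
      simp only [AddSubmonoidClass.coe_finsetSum]
      exact blk_mul a.1 b.1 p.1 q.1
    simp only [Matrix.of_apply, this, map_sum, map_mul, Matrix.sum_apply, Matrix.mul_apply,
      Fintype.sum_prod_type]
  map_add' := by
    intro a b
    ext p q
    have : (⟨blk (a + b).1 p.1 q.1, (a + b).2 p.1 q.1⟩ : A)
        = (⟨blk a.1 p.1 q.1, a.2 p.1 q.1⟩ : A) + ⟨blk b.1 p.1 q.1, b.2 p.1 q.1⟩ :=
      Subtype.ext rfl
    simp only [Matrix.of_apply, this, map_add, Matrix.add_apply]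
  commutes' := by
    intro r
    ext p q
    have : (⟨blk (algebraMap ℂ (blkAlg A n) r).1 p.1 q.1,
        (algebraMap ℂ (blkAlg A n) r).2 p.1 q.1⟩ : A)
        = if p.1 = q.1 then algebraMap ℂ A r else 0 := by
      apply Subtype.ext
      rw [apply_ite Subtype.val]
      exact blk_algebraMap (n := n) (d := d) r p.1 q.1
    simp only [Matrix.of_apply, this]
    obtain ⟨i, x⟩ := p
    obtain ⟨j, y⟩ := q
    have hr : Φ (algebraMap ℂ A r) = algebraMap ℂ _ r := AlgHomClass.commutes Φ r
    by_cases h : i = j <;> simp [h, hr, Matrix.algebraMap_matrix_apply]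
  map_star' := by
    intro a
    ext p q
    have : (⟨blk (star a).1 p.1 q.1, (star a).2 p.1 q.1⟩ : A)
        = star (⟨blk a.1 q.1 p.1, a.2 q.1 p.1⟩ : A) :=
      Subtype.ext (blk_star a.1 p.1 q.1)
    simp only [Matrix.of_apply, this, map_star, Matrix.star_apply]

theorem opN_eq_norm {m : Type*} [Fintype m] [DecidableEq m] (A : Matrix m m ℂ) :
    opN A = ‖A‖ := rfl

theorem amp_le {d e : ℕ} (A : StarSubalgebra ℂ (Matrix (Fin d) (Fin d) ℂ))
    (Φ : A →⋆ₐ[ℂ] Matrix (Fin e) (Fin e) ℂ) (n : ℕ) (a : blkAlg A n) :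
    opN (amp A Φ n a) ≤ opN a.1 := by
  have : IsClosed ((blkAlg A n : StarSubalgebra ℂ _) : 
      Set (Matrix (Fin n × Fin d) (Fin n × Fin d) ℂ)) :=
    Submodule.closed_of_finiteDimensional (blkAlg A n).toSubalgebra.toSubmodule
  rw [opN_eq_norm, opN_eq_norm]
  exact NonUnitalStarAlgHom.norm_apply_le (amp A Φ n) a

theorem opN_diag_le {m : Type*} [Fintype m] [DecidableEq m] (v : m → ℂ) (hv : ∀ x, ‖v x‖ ≤ 1)
    (a : Matrix m m ℂ) : opN (diagonal v * a * diagonal v) ≤ opN a := by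
  simp only [opN_eq_norm]
  have h : ‖(diagonal v : Matrix m m ℂ)‖ ≤ 1 := by
    rw [Matrix.l2_opNorm_diagonal]
    exact (pi_norm_le_iff_of_nonneg zero_le_one).2 hv
  calc _ ≤ ‖(diagonal v : Matrix m m ℂ)‖ * ‖a‖ * ‖(diagonal v : Matrix m m ℂ)‖ :=
        (norm_mul_le _ _).trans (by gcongr; exact norm_mul_le _ _)
    _ ≤ 1 * ‖a‖ * 1 := by gcongr
    _ = ‖a‖ := by ring

theorem eq_zero_of_opN {m : Type*} [Fintype m] [DecidableEq m] (a : Matrix m m ℂ)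
    (h : opN a = 0) : a = 0 := by
  rw [opN_eq_norm] at h
  exact norm_eq_zero.1 h

theorem opN_zero' {m : Type*} [Fintype m] [DecidableEq m] : opN (0 : Matrix m m ℂ) = 0 := by
  rw [opN_eq_norm, norm_zero]

end Key

/-- An irreducibly acting operator system `S ⊆ M_d(ℂ)` whose generated C*-algebra is a
direct sum of full matrix blocks has trivial Šilov ideal: every *-homomorphism `Φ`
from `C*(S)` (into a C*-algebra of matrices, hence onto a C*-algebra `B = ran Φ`)
that is completely isometric on `S` is injective; i.e. `C*_env(S) = C*(S)`. -/
theorem stmt_17 {d : ℕ}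
    (S : Submodule ℂ (Matrix (Fin d) (Fin d) ℂ))
    (hS1 : (1 : Matrix (Fin d) (Fin d) ℂ) ∈ S)
    (hSstar : ∀ s ∈ S, sᴴ ∈ S)
    -- `S` acts irreducibly: no nontrivial reducing projection `p` such that the
    -- compression `s ↦ p s p` is completely isometric on `S`.
    (hirr : ¬ ∃ p : Matrix (Fin d) (Fin d) ℂ, p ≠ 0 ∧ p ≠ 1 ∧ p * p = p ∧ pᴴ = p ∧
      (∀ s ∈ S, p * s = s * p) ∧
      (∀ (n : ℕ) (a : Matrix (Fin n × Fin d) (Fin n × Fin d) ℂ),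
        (∀ i j : Fin n, (Matrix.of fun x y => a (i, x) (j, y)) ∈ S) →
        opN a = opN (Matrix.kroneckerMap (· * ·) (1 : Matrix (Fin n) (Fin n) ℂ) p * a *
          Matrix.kroneckerMap (· * ·) (1 : Matrix (Fin n) (Fin n) ℂ) p)))
    -- the C*-algebra generated by `S` is the block-diagonal algebra `⊕_j M_{d_j}`
    -- determined by the surjective block assignment `β`.
    {nb : ℕ} (β : Fin d → Fin nb) (hβ : Function.Surjective β)
    (hCS : ((StarAlgebra.adjoin ℂ (S : Set (Matrix (Fin d) (Fin d) ℂ))) :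
        Set (Matrix (Fin d) (Fin d) ℂ))
      = {a | ∀ x y, β x ≠ β y → a x y = 0}) :
    ∀ (e : ℕ)
      (Φ : StarAlgebra.adjoin ℂ (S : Set (Matrix (Fin d) (Fin d) ℂ)) →⋆ₐ[ℂ]
        Matrix (Fin e) (Fin e) ℂ),
      (∀ (n : ℕ) (a : Matrix (Fin n × Fin d) (Fin n × Fin d) ℂ)
        (ha : ∀ i j : Fin n, (Matrix.of fun x y => a (i, x) (j, y)) ∈ S),
        opN a = opN (Matrix.of fun pq uv : Fin n × Fin e =>
          Φ ⟨Matrix.of fun x y => a (pq.1, x) (uv.1, y),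
              StarAlgebra.subset_adjoin ℂ _ (ha pq.1 uv.1)⟩ pq.2 uv.2)) →
      Function.Injective Φ := by
  intro e Φ hΦ
  classical
  have hmem : ∀ b : Matrix (Fin d) (Fin d) ℂ,
      b ∈ StarAlgebra.adjoin ℂ (S : Set (Matrix (Fin d) (Fin d) ℂ)) ↔
        ∀ x y, β x ≠ β y → b x y = 0 := by
    intro b
    rw [← SetLike.mem_coe, hCS]
    rfl
  have hSA : ∀ s ∈ S, s ∈ StarAlgebra.adjoin ℂ (S : Set (Matrix (Fin d) (Fin d) ℂ)) :=
    fun s hs => StarAlgebra.subset_adjoin ℂ _ hs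
  replace hΦ : ∀ (n : ℕ) (a : Matrix (Fin n × Fin d) (Fin n × Fin d) ℂ)
      (ha : ∀ i j : Fin n, (Matrix.of fun x y => a (i, x) (j, y)) ∈ S),
      opN a = opN (Matrix.of fun pq uv : Fin n × Fin e =>
        Φ ⟨Matrix.of fun x y => a (pq.1, x) (uv.1, y), hSA _ (ha pq.1 uv.1)⟩ pq.2 uv.2) := hΦ
  clear hCS
  revert hΦ
  revert Φ
  revert hSA
  revert hmem
  generalize StarAlgebra.adjoin ℂ (S : Set (Matrix (Fin d) (Fin d) ℂ)) = A
  intro hmem hSA Φ hΦ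
  have hE : ∀ x y, β x = β y → (Matrix.single x y (1 : ℂ)) ∈ A := by
    intro x y h
    rw [hmem]
    intro u v huv
    rw [Matrix.single_apply, if_neg]
    rintro ⟨rfl, rfl⟩
    exact huv h
  -- kernel propagation
  have hprop : ∀ a : A, Φ a = 0 → ∀ x y, a.1 x y ≠ 0 → ∀ z, β z = β x →
      Φ ⟨Matrix.single z z 1, hE z z rfl⟩ = 0 := by
    intro a ha x y hxy z hz
    have hb : β x = β y := by
      by_contra h
      exact hxy ((hmem a.1).1 a.2 x y h)
    have : (⟨Matrix.single z z 1, hE z z rfl⟩ : A) =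
        (a.1 x y)⁻¹ • ((⟨Matrix.single z x 1, hE z x hz⟩ : A) * a *
          (⟨Matrix.single y z 1, hE y z (by rw [hz, hb])⟩ : A)) := by
      apply Subtype.ext
      change Matrix.single z z (1 : ℂ) =
        (a.1 x y)⁻¹ • (Matrix.single z x 1 * a.1 * Matrix.single y z 1)
      rw [Matrix.single_mul_mul_single]
      simp [hxy]
    rw [this, map_smul, map_mul, map_mul, ha]
    simp
  rw [injective_iff_map_eq_zero]
  intro a0 ha0
  by_contra hne
  obtain ⟨x0, y0, hxy0⟩ : ∃ x y, a0.1 x y ≠ 0 := by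
    by_contra! h
    exact hne (Subtype.ext (Matrix.ext h))
  apply hirr
  let g : Fin d → Matrix (Fin e) (Fin e) ℂ := fun x => Φ ⟨Matrix.single x x 1, hE x x rfl⟩
  have hgβ : ∀ x y, β x = β y → g x = 0 → g y = 0 := by
    intro x y h hx
    exact hprop _ hx x x (by simp) y h.symm
  have hgx0 : g x0 = 0 := hprop a0 ha0 x0 y0 hxy0 x0 rfl
  let v : Fin d → ℂ := fun x => if g x = 0 then 0 else 1
  have hv : ∀ x, ‖v x‖ ≤ 1 := by
    intro x
    simp only [v]
    split_ifs <;> simp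
  have hpA : diagonal v ∈ A := by
    rw [hmem]
    intro x y h
    exact diagonal_apply_ne _ (fun h' => h (by rw [h']))
  have hP1 : Φ ⟨diagonal v, hpA⟩ = 1 := by
    have : (⟨diagonal v, hpA⟩ : A) =
        1 - ∑ x, (1 - v x) • (⟨Matrix.single x x 1, hE x x rfl⟩ : A) := by
      apply Subtype.ext
      change diagonal v = 1 - (A.subtype (∑ x, (1 - v x) • (⟨Matrix.single x x 1, hE x x rfl⟩ : A)))
      rw [map_sum]
      change diagonal v = 1 - ∑ x, (1 - v x) • Matrix.single x x (1 : ℂ)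
      ext i j
      by_cases hij : i = j
      · subst hij
        simp [Matrix.sum_apply, Matrix.single_apply]
      · have : ∀ x, ¬ (x = i ∧ x = j) := by rintro x ⟨rfl, rfl⟩; exact hij rfl
        simp [Matrix.sum_apply, Matrix.single_apply, hij, this]
    rw [this, map_sub, map_one, map_sum, Finset.sum_eq_zero, sub_zero]
    intro x _
    rw [map_smul]
    by_cases hx : g x = 0
    · change _ • g x = 0
      rw [hx, smul_zero]
    · simp [v, hx]
  have hcomm : ∀ b ∈ A, diagonal v * b = b * diagonal v := by
    intro b hb
    ext x y
    rw [diagonal_mul, mul_diagonal]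
    by_cases h : β x = β y
    · have : v x = v y := by
        simp only [v]
        have : g x = 0 ↔ g y = 0 := ⟨hgβ x y h, hgβ y x h.symm⟩
        simp [this]
      rw [this, mul_comm]
    · rw [(hmem b).1 hb x y h]
      simp
  refine ⟨diagonal v, ?_, ?_, ?_, ?_, fun s hs => hcomm s (hSA s hs), ?_⟩
  · intro h0
    have h10 : (1 : Matrix (Fin e) (Fin e) ℂ) = 0 := by
      rw [← hP1]
      have : (⟨diagonal v, hpA⟩ : A) = 0 := Subtype.ext h0
      rw [this, map_zero]
    have h1 : ∀ i j : Fin 1, (Matrix.of fun x y =>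
        (1 : Matrix (Fin 1 × Fin d) (Fin 1 × Fin d) ℂ) (i, x) (j, y)) ∈ S := by
      intro i j
      convert hS1 using 1
      ext x y
      simp [Matrix.one_apply, Subsingleton.elim i j]
    have h2 := hΦ 1 1 h1
    have hz : ∀ M : Matrix (Fin e) (Fin e) ℂ, M = 0 := by
      intro M
      rw [← one_mul M, h10, zero_mul]
    have h4 : ∀ M : Matrix (Fin 1 × Fin e) (Fin 1 × Fin e) ℂ, M = 0 := by
      intro M
      ext p q
      have := congrFun (congrFun (hz (Matrix.of fun x y => M (p.1, x) (q.1, y))) p.2) q.2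
      simpa using this
    rw [h4 (Matrix.of _), opN_zero'] at h2
    have h3 := eq_zero_of_opN _ h2
    have := congrFun (congrFun h3 (0, x0)) (0, x0)
    simp at this
  · intro h1
    have := congrFun (congrFun h1 x0) x0
    simp [v, hgx0] at this
  · rw [diagonal_mul_diagonal]
    congr 1
    ext x
    simp [v]
  · rw [diagonal_conjTranspose]
    congr 1
    ext x
    simp only [v, Pi.star_apply]
    split_ifs <;> simp
  · intro n a ha
    have hk : Matrix.kroneckerMap (· * ·) (1 : Matrix (Fin n) (Fin n) ℂ) (diagonal v)
        = diagonal (fun q : Fin n × Fin d => v q.2) := by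
      ext ⟨i, x⟩ ⟨j, y⟩
      by_cases h : i = j <;> by_cases h' : x = y <;>
        simp [Matrix.one_apply, Matrix.diagonal_apply, h, h']
    rw [hk]
    set c := diagonal (fun q : Fin n × Fin d => v q.2) * a *
      diagonal (fun q : Fin n × Fin d => v q.2) with hc
    have hcb : ∀ i j, blk c i j = diagonal v * blk a i j * diagonal v := by
      intro i j
      ext x y
      simp [hc, blk, Matrix.mul_diagonal, Matrix.diagonal_mul]
    have haA : ∀ i j, blk a i j ∈ A := fun i j => hSA _ (ha i j)
    have hcA : c ∈ blkAlg A n := by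
      intro i j
      rw [hcb]
      exact mul_mem (mul_mem hpA (haA i j)) hpA
    apply le_antisymm
    · rw [hΦ n a ha]
      refine le_trans (le_of_eq ?_) (amp_le A Φ n ⟨c, hcA⟩)
      congr 1
      ext p q
      change Φ ⟨blk a p.1 q.1, _⟩ p.2 q.2 = Φ ⟨blk c p.1 q.1, _⟩ p.2 q.2
      have : (⟨blk c p.1 q.1, hcA p.1 q.1⟩ : A) =
          ⟨diagonal v, hpA⟩ * ⟨blk a p.1 q.1, haA p.1 q.1⟩ * ⟨diagonal v, hpA⟩ :=
        Subtype.ext (hcb p.1 q.1)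
      rw [this, map_mul, map_mul, hP1, one_mul, mul_one]
    · rw [hc]
      exact opN_diag_le (fun q : Fin n × Fin d => v q.2) (fun q => hv q.2) a
end
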